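/- Let V be a Z₂-graded vector space over a field k of characteristic zero, let v₁,…,v_n be homogeneous elements of V, let w_i denote v_i regarded as an element of the parity reversion ΠV (so |w_i| = |v_i| + 1 mod 2), and let σ be a permutation of n letters. Then (−1)^{Σ_{i=1}^{n−1}(n−i)|v_i|} · sgn(σ) · ε(σ; v₁,…,v_n) = (−1)^{Σ_{i=1}^{n−1}(n−i)|v_{σ(i)}|} · ε(σ; w₁,…,w_n). -/

import Mathlib

/-!
Since `(a + 1) (b + 1) = a b + a + b + 1`, parity reversion multiplies the factor of each inversion
`(i, j)` by `-1` and by `(-1) ^ (|v_{σ i}| + |v_{σ j}|)`. The factors `-1` make up `sgn σ`. As for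
the others, `n - i` counts the positions after `i`, so `(-1) ^ ∑ (n - i) |v_i|` is the product of
`(-1) ^ |v_i|` over the pairs `i < j`. After permuting by `σ`, the first member of the pair
`{v_{σ i}, v_{σ j}}` has changed exactly when `(i, j)` is an inversion, so each inversion multiplies
this sign by the same `(-1) ^ (|v_{σ i}| + |v_{σ j}|)`.
-/

/-- The Koszul sign `ε(σ; v₁,…,v_n)` of a permutation `σ` acting on homogeneous elements
whose parities are `g : Fin n → ZMod 2`: the product over the inversions of `σ` of
`(−1)^{|v_{σ(i)}||v_{σ(j)}|}`. -/
def koszulSign {n : ℕ} (σ : Equiv.Perm (Fin n)) (g : Fin n → ZMod 2) : ℤ :=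
  ∏ q ∈ Finset.univ.filter (fun q : Fin n × Fin n => q.1 < q.2 ∧ σ q.2 < σ q.1),
    (-1 : ℤ) ^ ((g (σ q.1)) * (g (σ q.2))).val

section Inversions

variable {ι κ M : Type*} [Fintype ι] [LinearOrder ι] [LinearOrder κ] [CommMonoid M]

/-- The inversions of a map `f` between linear orders, each recorded once, as the pair of arguments
`(i, j)` with `i < j`. -/
def inversions (f : ι → κ) : Finset (ι × ι) :=
  {q | q.1 < q.2 ∧ f q.2 < f q.1}

lemma prod_lt_eq_prod_lt_and_lt_mul_prod_inversions {f : ι → κ} (hf : f.Injective)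
    (F : ι × ι → M) :
    ∏ q with q.1 < q.2, F q =
      (∏ q with q.1 < q.2 ∧ f q.1 < f q.2, F q) * ∏ q ∈ inversions f, F q := by
  have inversion_iff (q : ι × ι) : q.1 < q.2 ∧ f q.2 < f q.1 ↔ q.1 < q.2 ∧ ¬f q.1 < f q.2 :=
    and_congr_right fun hq => by rw [not_lt, (hf.ne hq.ne').le_iff_lt]
  simp only [inversions, inversion_iff, ← Finset.filter_filter,
    Finset.prod_filter_mul_prod_filter_not]

lemma prod_apply_lt_eq_prod_lt_and_lt_mul_prod_inversions_swap (f : ι → κ) (F : ι × ι → M) :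
    ∏ q with f q.1 < f q.2, F q =
      (∏ q with q.1 < q.2 ∧ f q.1 < f q.2, F q) * ∏ q ∈ inversions f, F q.swap := by
  have prod_not_lt : ∏ q with f q.1 < f q.2 ∧ ¬q.1 < q.2, F q = ∏ q ∈ inversions f, F q.swap := by
    refine Finset.prod_equiv (Equiv.prodComm ι ι) (fun q => ?_) fun q _ => by simp
    suffices f q.1 < f q.2 → (q.2 ≤ q.1 ↔ q.2 < q.1) by simpa [inversions, and_comm] using this
    intro hq
    exact (ne_of_apply_ne f hq.ne').le_iff_lt
  simp only [← prod_not_lt, and_comm (a := _ < _) (b := f _ < f _), ← Finset.filter_filter,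
    Finset.prod_filter_mul_prod_filter_not]

lemma prod_lt_comp_mul_prod_inversions [Fintype κ] (e : ι ≃ κ) (F : κ → κ → M) :
    (∏ q : ι × ι with q.1 < q.2, F (e q.1) (e q.2)) * ∏ q ∈ inversions e, F (e q.2) (e q.1) =
      (∏ q : κ × κ with q.1 < q.2, F q.1 q.2) * ∏ q ∈ inversions e, F (e q.1) (e q.2) := by
  have reindex : ∏ q : κ × κ with q.1 < q.2, F q.1 q.2 =
      ∏ q : ι × ι with e q.1 < e q.2, F (e q.1) (e q.2) :=
    (Finset.prod_equiv (e.prodCongr e) (by simp) (by simp)).symm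
  rw [reindex, prod_lt_eq_prod_lt_and_lt_mul_prod_inversions e.injective,
    prod_apply_lt_eq_prod_lt_and_lt_mul_prod_inversions_swap]
  exact mul_right_comm _ _ _

end Inversions

lemma pow_sum_sub_mul_eq_prod_lt {M : Type*} [CommMonoid M] {n : ℕ} (x : M) (a : Fin n → ℕ) :
    x ^ (∑ i : Fin n, (n - 1 - (i : ℕ)) * a i) =
      ∏ q : Fin n × Fin n with q.1 < q.2, x ^ a q.1 := by
  simp_rw [Finset.prod_filter, Fintype.prod_prod_type, ← Finset.prod_filter,
    Finset.filter_lt_eq_Ioi, Finset.prod_const, Fin.card_Ioi, ← pow_mul',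
    Finset.prod_pow_eq_pow_sum]

lemma sign_eq_neg_one_pow_card_inversions {n : ℕ} (σ : Equiv.Perm (Fin n)) :
    σ.sign = (-1) ^ (inversions σ).card := by
  rw [← Finset.prod_const, inversions, ← Finset.filter_filter, Finset.prod_filter,
    Finset.prod_filter, Fintype.prod_prod_type, σ.sign_eq_prod_prod_Ioi]
  refine Finset.prod_congr rfl fun i _ => ?_
  rw [← Finset.prod_filter, Finset.filter_lt_eq_Ioi]
  refine Finset.prod_congr rfl fun j hj => ?_
  have hne : σ i ≠ σ j := σ.injective.ne (Finset.mem_Ioi.mp hj).ne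
  simp only [← hne.symm.le_iff_lt, ← not_lt, ite_not]

section ParityReversion

variable {R : Type*} [Monoid R] [HasDistribNeg R]

lemma neg_one_pow_val_add (a b : ZMod 2) :
    (-1 : R) ^ (a + b).val = (-1) ^ a.val * (-1) ^ b.val := by
  rw [ZMod.val_add, ← pow_eq_pow_mod _ neg_one_sq, pow_add]

lemma neg_one_pow_val_add_one_mul_add_one (a b : ZMod 2) :
    (-1 : R) ^ ((a + 1) * (b + 1)).val =
      -1 * (-1) ^ (a * b).val * ((-1) ^ a.val * (-1) ^ b.val) := by
  have expand : (a + 1) * (b + 1) = 1 + a * b + (a + b) := by ring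
  rw [expand, neg_one_pow_val_add, neg_one_pow_val_add, neg_one_pow_val_add, ZMod.val_one, pow_one]

end ParityReversion

lemma koszulSign_eq_prod_inversions {n : ℕ} (σ : Equiv.Perm (Fin n)) (g : Fin n → ZMod 2) :
    koszulSign σ g = ∏ q ∈ inversions σ, (-1) ^ (g (σ q.1) * g (σ q.2)).val :=
  rfl

lemma koszulSign_add_one {n : ℕ} (σ : Equiv.Perm (Fin n)) (g : Fin n → ZMod 2) :
    koszulSign σ (fun i => g i + 1) = (σ.sign : ℤ) * koszulSign σ g *
      ((∏ q ∈ inversions σ, (-1) ^ (g (σ q.1)).val) *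
        ∏ q ∈ inversions σ, (-1) ^ (g (σ q.2)).val) := by
  simp_rw [koszulSign_eq_prod_inversions, neg_one_pow_val_add_one_mul_add_one,
    Finset.prod_mul_distrib, Finset.prod_const, sign_eq_neg_one_pow_card_inversions,
    Units.val_pow_eq_pow_val, Units.val_neg, Units.val_one]

theorem parity_reversion_sign_general {n : ℕ} (g : Fin n → ZMod 2) (σ : Equiv.Perm (Fin n)) :
    (-1 : ℤ) ^ (∑ i : Fin n, (n - 1 - (i : ℕ)) * (g i).val) * (σ.sign : ℤ) * koszulSign σ g =
      (-1 : ℤ) ^ (∑ i : Fin n, (n - 1 - (i : ℕ)) * (g (σ i)).val) *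
        koszulSign σ (fun i => g i + 1) := by
  let χ (i : Fin n) : ℤ := (-1) ^ (g i).val
  let weight := ∏ q : Fin n × Fin n with q.1 < q.2, χ q.1
  let permutedWeight := ∏ q : Fin n × Fin n with q.1 < q.2, χ (σ q.1)
  let firsts := ∏ q ∈ inversions σ, χ (σ q.1)
  let seconds := ∏ q ∈ inversions σ, χ (σ q.2)
  have permute : permutedWeight * seconds = weight * firsts :=
    prod_lt_comp_mul_prod_inversions σ fun i _ => χ i
  have firsts_mul_self : firsts * firsts = 1 := by
    simp [firsts, χ, ← Finset.prod_mul_distrib, ← mul_pow]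
  rw [pow_sum_sub_mul_eq_prod_lt, pow_sum_sub_mul_eq_prod_lt, koszulSign_add_one]
  calc weight * σ.sign * koszulSign σ g
      = weight * σ.sign * koszulSign σ g * (firsts * firsts) := by rw [firsts_mul_self, mul_one]
    _ = weight * firsts * (σ.sign * koszulSign σ g * firsts) := by ring
    _ = permutedWeight * seconds * (σ.sign * koszulSign σ g * firsts) := by rw [permute]
    _ = permutedWeight * (σ.sign * koszulSign σ g * (firsts * seconds)) := by ring

/-- for homogeneous `v₁,…,v_n` in a Z₂-graded vector space, with `w_i = v_i`
regarded in the parity reversion `ΠV` (so `|w_i| = |v_i| + 1`), and any permutation `σ`: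
`(−1)^{Σ (n−i)|v_i|} · sgn(σ) · ε(σ; v) = (−1)^{Σ (n−i)|v_{σ(i)}|} · ε(σ; w)`. -/
theorem parity_reversion_sign {K V : Type*} [Field K] [CharZero K]
    [AddCommGroup V] [Module K V]
    (Vg : ZMod 2 → Submodule K V) (hVg : DirectSum.IsInternal Vg)
    {n : ℕ} (g : Fin n → ZMod 2) (v : Fin n → V)
    (hv : ∀ i, v i ∈ Vg (g i)) (σ : Equiv.Perm (Fin n)) :
    ((-1 : ℤ) ^ (∑ i : Fin n, (n - 1 - (i : ℕ)) * (g i).val)) *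
        (Equiv.Perm.sign σ : ℤ) * koszulSign σ g =
      ((-1 : ℤ) ^ (∑ i : Fin n, (n - 1 - (i : ℕ)) * (g (σ i)).val)) *
        koszulSign σ (fun i => g i + 1) :=
  parity_reversion_sign_general g σ
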